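/- arXiv:2001.00303 — 4 statements merged into one kernel-verified Lean document; each statement's English description precedes it below -/
import Mathlib

section
/- There is a universal constant c ≥ 1 such that: for every δ ∈ (0,1), every integer Δ ≥ 3, every simple graph G on [n] with n ≥ 2 and maximum degree at most Δ, setting λ = (1−δ)·λ_c(Δ), the hardcore distribution μ = μ_{G,λ} satisfies ∑_{u ≠ v} |Ψ_μ(u,v)| ≤ exp(c/δ) for every vertex v ∈ [n]. -/
open scoped Classical
open Finset

noncomputable section

namespace PaperStmt

variable {n : ℕ}

/-- Probability of an event under `μ`. -/
def prE (μ : Finset (Fin n) → ℝ) (E : Finset (Fin n) → Prop) : ℝ :=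
  ∑ S : Finset (Fin n), if E S then μ S else 0

/-- Conditional probability `Pr[E | F]` under `μ`. -/
def condPrE (μ : Finset (Fin n) → ℝ) (E F : Finset (Fin n) → Prop) : ℝ :=
  prE μ (fun S => E S ∧ F S) / prE μ F

/-- The pairwise influence matrix `Ψ_μ`. -/
def psi (μ : Finset (Fin n) → ℝ) : Matrix (Fin n) (Fin n) ℝ :=
  fun i j => if i = j then 0 else
    condPrE μ (fun S => j ∈ S) (fun S => i ∈ S)
      - condPrE μ (fun S => j ∈ S) (fun S => i ∉ S)

/-- `S` is an independent set of `G`. -/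
def IsIndepSet (G : SimpleGraph (Fin n)) (S : Finset (Fin n)) : Prop :=
  ∀ i ∈ S, ∀ j ∈ S, ¬ G.Adj i j

/-- The hardcore partition function `Z_G(λ)`. -/
def hardcoreZ (G : SimpleGraph (Fin n)) (lam : ℝ) : ℝ :=
  ∑ S : Finset (Fin n), if IsIndepSet G S then lam ^ S.card else 0

/-- The hardcore distribution `μ_{G,λ}`. -/
def hardcore (G : SimpleGraph (Fin n)) (lam : ℝ) : Finset (Fin n) → ℝ :=
  fun S => if IsIndepSet G S then lam ^ S.card / hardcoreZ G lam else 0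

/-- The uniqueness threshold `λ_c(Δ) = (Δ-1)^(Δ-1) / (Δ-2)^Δ`. -/
def lamC (Δ : ℕ) : ℝ := ((Δ : ℝ) - 1) ^ (Δ - 1) / ((Δ : ℝ) - 2) ^ Δ

/-- The unnormalised hardcore weight of a set. -/
def weight (G : SimpleGraph (Fin n)) (lam : ℝ) (S : Finset (Fin n)) : ℝ :=
  if IsIndepSet G S then lam ^ S.card else 0

/-- The weighted sum of `f` over the independent subsets of `W`. -/
def wsum (G : SimpleGraph (Fin n)) (lam : ℝ) (W : Finset (Fin n)) (f : Finset (Fin n) → ℝ) : ℝ :=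
  ∑ S ∈ W.powerset, weight G lam S * f S

/-- The partition function of the subgraph induced by `W`. -/
def partZ (G : SimpleGraph (Fin n)) (lam : ℝ) (W : Finset (Fin n)) : ℝ :=
  wsum G lam W fun _ => 1

/-- The occupation probability of `u` in the subgraph induced by `W`. -/
def occ (G : SimpleGraph (Fin n)) (lam : ℝ) (W : Finset (Fin n)) (u : Fin n) : ℝ :=
  wsum G lam W (fun S => if u ∈ S then 1 else 0) / partZ G lam W

/-- The neighbours of `v` as a finset. -/
def nbr (G : SimpleGraph (Fin n)) (v : Fin n) : Finset (Fin n) := univ.filter (G.Adj v)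

/-- The influence of `v` on `u` in the subgraph induced by `W`, equal to `1` for `u = v ∈ W`. -/
def infl (G : SimpleGraph (Fin n)) (lam : ℝ) (W : Finset (Fin n)) (v u : Fin n) : ℝ :=
  (if u = v then 1 else 0) + occ G lam (W.erase v \ nbr G v) u - occ G lam (W.erase v) u

variable {G : SimpleGraph (Fin n)} {lam : ℝ} {W T : Finset (Fin n)} {u v : Fin n}

lemma weight_nonneg (hl : 0 < lam) (S : Finset (Fin n)) : 0 ≤ weight G lam S := by
  unfold weight; split_ifs <;> positivity

lemma weight_insert {S : Finset (Fin n)} (hv : v ∉ S) :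
    weight G lam (insert v S) = if Disjoint S (nbr G v) then lam * weight G lam S else 0 := by
  have key : IsIndepSet G (insert v S) ↔ Disjoint S (nbr G v) ∧ IsIndepSet G S := by
    simp only [IsIndepSet, Finset.disjoint_left, nbr, mem_filter, mem_univ, true_and, mem_insert]
    constructor
    · intro h
      exact ⟨fun a ha => h v (Or.inl rfl) a (Or.inr ha),
        fun i hi j hj => h i (Or.inr hi) j (Or.inr hj)⟩
    · rintro ⟨h1, h2⟩ i (rfl | hi) j (rfl | hj)
      · exact G.loopless.irrefl _
      · exact h1 hj
      · exact fun h => h1 hi h.symm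
      · exact h2 i hi j hj
  unfold weight
  rw [card_insert_of_notMem hv]
  by_cases h1 : Disjoint S (nbr G v) <;> by_cases h2 : IsIndepSet G S <;>
    simp [key, h1, h2, pow_succ, mul_comm]

/-- Splitting a weighted sum according to whether `v` is occupied. -/
lemma wsum_split (hv : v ∈ W) (f : Finset (Fin n) → ℝ) :
    wsum G lam W f = wsum G lam (W.erase v) f +
      lam * wsum G lam (W.erase v \ nbr G v) (fun S => f (insert v S)) := by
  have hnot : v ∉ W.erase v := notMem_erase v W
  unfold wsum
  conv_lhs => rw [← insert_erase hv]
  rw [sum_powerset_insert hnot]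
  congr 1
  rw [mul_sum]
  symm
  apply sum_subset_zero_on_sdiff (powerset_mono.2 sdiff_subset)
  · intro S hS
    simp only [mem_sdiff, mem_powerset] at hS
    have hd : ¬ Disjoint S (nbr G v) := fun h => hS.2 (subset_sdiff.2 ⟨hS.1, h⟩)
    rw [weight_insert (fun h => hnot (hS.1 h)), if_neg hd, zero_mul]
  · intro S hS
    rw [mem_powerset, subset_sdiff] at hS
    rw [weight_insert (fun h => hnot (hS.1 h)), if_pos hS.2]
    ring

lemma partZ_pos (hl : 0 < lam) (W : Finset (Fin n)) : 0 < partZ G lam W := by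
  unfold partZ wsum
  apply sum_pos' (fun S _ => by simpa using weight_nonneg hl S)
  exact ⟨∅, empty_mem_powerset W, by simp [weight, IsIndepSet]⟩

lemma partZ_split (hv : v ∈ W) :
    partZ G lam W = partZ G lam (W.erase v) + lam * partZ G lam (W.erase v \ nbr G v) :=
  wsum_split hv _

lemma wsum_mem_self (hv : v ∈ W) :
    wsum G lam W (fun S => if v ∈ S then 1 else 0) =
      lam * partZ G lam (W.erase v \ nbr G v) := by
  rw [wsum_split hv]
  have : wsum G lam (W.erase v) (fun S => if v ∈ S then 1 else 0) = 0 := by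
    unfold wsum
    refine sum_eq_zero fun S hS => ?_
    simp only [if_neg (fun h : v ∈ S => notMem_erase v W (mem_powerset.1 hS h)), mul_zero]
  rw [this]
  simp [partZ]

lemma occ_eq_zero (hu : u ∉ W) : occ G lam W u = 0 := by
  unfold occ wsum
  rw [sum_eq_zero, zero_div]
  intro S hS
  simp only [if_neg (fun h : u ∈ S => hu (mem_powerset.1 hS h)), mul_zero]

lemma occ_self (hv : v ∈ W) :
    occ G lam W v = lam * partZ G lam (W.erase v \ nbr G v) / partZ G lam W := by
  rw [occ, wsum_mem_self hv]

lemma one_sub_occ (hl : 0 < lam) (hv : v ∈ W) :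
    1 - occ G lam W v = partZ G lam (W.erase v) / partZ G lam W := by
  have := partZ_pos (G := G) hl W
  rw [occ_self hv, eq_div_iff this.ne', sub_mul, div_mul_cancel₀ _ this.ne', partZ_split hv]
  ring

lemma wsum_mem_split (hv : v ∈ W) (huv : u ≠ v) :
    wsum G lam W (fun S => if u ∈ S then 1 else 0) =
      wsum G lam (W.erase v) (fun S => if u ∈ S then 1 else 0) +
      lam * wsum G lam (W.erase v \ nbr G v) (fun S => if u ∈ S then 1 else 0) := by
  rw [wsum_split hv]
  simp [huv]

/-- Deleting `v` changes the occupation probability of `u` by an influence term. -/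
lemma occ_erase_sub (hl : 0 < lam) (hv : v ∈ W) (u : Fin n) :
    occ G lam (W.erase v) u - occ G lam W u = -(occ G lam W v * infl G lam W v u) := by
  by_cases huv : u = v
  · subst huv
    rw [infl, if_pos rfl, occ_eq_zero (W := W.erase u) (by simp),
      occ_eq_zero (W := W.erase u \ nbr G u) (by simp)]
    ring
  · have h1 := partZ_pos (G := G) hl W
    have h2 := partZ_pos (G := G) hl (W.erase v)
    have h3 := partZ_pos (G := G) hl (W.erase v \ nbr G v)
    have h4 := partZ_split (G := G) (lam := lam) hv
    have h5 := wsum_mem_split (G := G) (lam := lam) hv huv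
    rw [infl, if_neg huv, occ_self hv]
    unfold occ
    rw [h5]
    generalize wsum G lam (W.erase v) _ = a
    generalize wsum G lam (W.erase v \ nbr G v) _ = b
    generalize partZ G lam W = z at *
    generalize partZ G lam (W.erase v) = z₀ at *
    generalize partZ G lam (W.erase v \ nbr G v) = z₁ at *
    subst h4
    field_simp
    ring

lemma occ_pos (hl : 0 < lam) (hv : v ∈ W) : 0 < occ G lam W v := by
  rw [occ_self hv]
  have := partZ_pos (G := G) hl W
  have := partZ_pos (G := G) hl (W.erase v \ nbr G v)
  positivity

lemma occ_lt_one (hl : 0 < lam) (hv : v ∈ W) : occ G lam W v < 1 := by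
  have h := one_sub_occ (G := G) hl hv
  have := partZ_pos (G := G) hl W
  have := partZ_pos (G := G) hl (W.erase v)
  have : 0 < 1 - occ G lam W v := by rw [h]; positivity
  linarith

/-- Removing the vertices of `T` one at a time: partition functions multiply and
occupation probabilities telescope. -/
lemma exists_telescope (hl : 0 < lam) (W : Finset (Fin n)) :
    ∀ T : Finset (Fin n), T ⊆ W → ∃ U : Fin n → Finset (Fin n),
      (∀ t ∈ T, t ∈ U t ∧ U t ⊆ W) ∧
      partZ G lam (W \ T) / partZ G lam W = ∏ t ∈ T, (1 - occ G lam (U t) t) ∧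
      ∀ u, occ G lam (W \ T) u - occ G lam W u =
        -∑ t ∈ T, occ G lam (U t) t * infl G lam (U t) t u := by
  intro T
  induction T using Finset.induction_on with
  | empty =>
    intro _
    exact ⟨fun _ => ∅, by simp, by simp [(partZ_pos (G := G) hl W).ne'], by simp⟩
  | insert a T ha ih =>
    intro hT
    obtain ⟨U, hU, hZ, hocc⟩ := ih (fun x hx => hT (mem_insert_of_mem hx))
    have haW : a ∈ W \ T := mem_sdiff.2 ⟨hT (mem_insert_self a T), ha⟩
    have hne : ∀ t ∈ T, Function.update U a (W \ T) t = U t := fun t ht =>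
      Function.update_of_ne (ne_of_mem_of_not_mem ht ha) _ _
    refine ⟨Function.update U a (W \ T), ?_, ?_, ?_⟩
    · intro t ht
      rcases mem_insert.1 ht with rfl | ht
      · simpa using mem_sdiff.1 haW
      · rw [hne t ht]; exact hU t ht
    · rw [prod_insert ha, prod_congr rfl (fun t ht => by rw [hne t ht]), ← hZ,
        Function.update_self, one_sub_occ hl haW, sdiff_insert]
      have := partZ_pos (G := G) hl (W \ T)
      field_simp
    · intro u
      rw [sum_insert ha, sum_congr rfl (fun t ht => by rw [hne t ht]), Function.update_self,
        sdiff_insert]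
      have h1 := occ_erase_sub (G := G) hl haW u
      have h2 := hocc u
      linarith

/-- The total influence of `v` in the subgraph induced by `W`. -/
def totalInfl (G : SimpleGraph (Fin n)) (lam : ℝ) (W : Finset (Fin n)) (v : Fin n) : ℝ :=
  ∑ u, |infl G lam W v u|

/-- The tree recursion for occupation probabilities and total influences. -/
lemma exists_recursion (hl : 0 < lam) (hv : v ∈ W) :
    ∃ U : Fin n → Finset (Fin n),
      (∀ t ∈ nbr G v ∩ W, t ∈ U t ∧ U t ⊆ W.erase v) ∧
      occ G lam W v = (lam * ∏ t ∈ nbr G v ∩ W, (1 - occ G lam (U t) t)) /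
        (1 + lam * ∏ t ∈ nbr G v ∩ W, (1 - occ G lam (U t) t)) ∧
      totalInfl G lam W v ≤
        1 + ∑ t ∈ nbr G v ∩ W, occ G lam (U t) t * totalInfl G lam (U t) t := by
  have hsub : nbr G v ∩ W ⊆ W.erase v := by
    intro t ht
    simp only [nbr, mem_inter, mem_filter, mem_univ, true_and] at ht
    exact mem_erase.2 ⟨fun h => G.loopless.irrefl v (h ▸ ht.1), ht.2⟩
  have hsd : W.erase v \ (nbr G v ∩ W) = W.erase v \ nbr G v := by
    ext t; simp only [mem_sdiff, mem_erase, mem_inter]; tauto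
  obtain ⟨U, hU, hZ, hocc⟩ := exists_telescope (G := G) hl (W.erase v) _ hsub
  rw [hsd] at hZ hocc
  refine ⟨U, hU, ?_, ?_⟩
  · rw [← hZ, occ_self hv, partZ_split hv]
    have := partZ_pos (G := G) hl (W.erase v)
    have := partZ_pos (G := G) hl (W.erase v \ nbr G v)
    field_simp
  · have hle : ∀ u, |infl G lam W v u| ≤ (if u = v then 1 else 0) +
        ∑ t ∈ nbr G v ∩ W, occ G lam (U t) t * |infl G lam (U t) t u| := by
      intro u
      rw [infl, add_sub_assoc, hocc u]
      refine (abs_add_le _ _).trans (add_le_add ?_ ?_)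
      · split_ifs <;> simp
      · rw [abs_neg]
        refine (abs_sum_le_sum_abs _ _).trans (sum_le_sum fun t ht => ?_)
        rw [abs_mul, abs_of_pos (occ_pos hl (hU t ht).1)]
    refine (sum_le_sum fun u _ => hle u).trans ?_
    rw [sum_add_distrib, sum_comm]
    simp [totalInfl, mul_sum]

lemma lamC_add_two (m : ℕ) :
    lamC (m + 2) = ((m : ℝ) + 1) ^ (m + 1) / (m : ℝ) ^ (m + 2) := by
  unfold lamC
  have h1 : ((m + 2 : ℕ) : ℝ) - 1 = m + 1 := by push_cast; ring
  have h2 : ((m + 2 : ℕ) : ℝ) - 2 = m := by push_cast; ring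
  rw [h1, h2, show m + 2 - 1 = m + 1 from rfl]

lemma lamC_pos {m : ℕ} (hm : 1 ≤ m) : 0 < lamC (m + 2) := by
  rw [lamC_add_two]
  have : (0 : ℝ) < m := by exact_mod_cast hm
  positivity

lemma mul_lamC_le {m : ℕ} (hm : 1 ≤ m) : ((m : ℝ) + 2) * lamC (m + 2) ≤ 27 := by
  have h1 : (1 : ℝ) ≤ m := by exact_mod_cast hm
  have h0 : (0 : ℝ) < m := by linarith
  have heq : ((m : ℝ) + 2) * lamC (m + 2) = (1 + 2 / m) * (1 + 1 / (m : ℝ)) ^ (m + 1) := by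
    rw [lamC_add_two, show 1 + 1 / (m : ℝ) = (m + 1) / m by field_simp, div_pow]
    field_simp
    ring
  have hexp : (1 + 1 / (m : ℝ)) ^ (m + 1) ≤ 9 := by
    calc (1 + 1 / (m : ℝ)) ^ (m + 1) ≤ Real.exp (1 / m) ^ (m + 1) := by
          gcongr
          linarith [Real.add_one_le_exp (1 / (m : ℝ))]
      _ = Real.exp ((m + 1 : ℕ) * (1 / m)) := (Real.exp_nat_mul _ _).symm
      _ ≤ Real.exp 2 := by
          apply Real.exp_le_exp.2
          push_cast
          rw [mul_one_div, div_le_iff₀ h0]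
          linarith
      _ = Real.exp 1 ^ 2 := by rw [← Real.exp_nat_mul]; norm_num
      _ ≤ 3 ^ 2 := by
          gcongr
          linarith [Real.exp_one_lt_d9]
      _ = 9 := by norm_num
  have h3 : 1 + 2 / (m : ℝ) ≤ 3 := by
    have : 2 / (m : ℝ) ≤ 2 := div_le_self (by norm_num) h1
    linarith
  rw [heq]
  calc (1 + 2 / (m : ℝ)) * (1 + 1 / (m : ℝ)) ^ (m + 1) ≤ 3 * 9 := by gcongr
    _ = 27 := by norm_num

/-- The extremal inequality that characterises the uniqueness threshold. -/
lemma lamC_mul_prod_le {ι : Type*} {m : ℕ} (hm : 1 ≤ m) (s : Finset ι) (p : ι → ℝ)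
    (hp : ∀ i ∈ s, p i ≤ 1) (hs : s.card ≤ m + 1) :
    lamC (m + 2) * (∏ i ∈ s, (1 - p i)) * (((m : ℝ) + 1) * ∑ i ∈ s, p i - 1) ≤ 1 := by
  have h0 : (0 : ℝ) < m := by exact_mod_cast hm
  have hL := lamC_pos hm
  have hprod : 0 ≤ ∏ i ∈ s, (1 - p i) := prod_nonneg fun i hi => by linarith [hp i hi]
  set P := ∑ i ∈ s, p i with hP
  rcases le_or_gt (((m : ℝ) + 1) * P - 1) 0 with hneg | hpos
  · have := mul_nonpos_of_nonneg_of_nonpos (mul_nonneg hL.le hprod) hneg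
    linarith
  set a : ℝ := m / (m + 1) with ha
  have ha0 : 0 < a := by positivity
  have hfac : ∀ i ∈ s, 1 - p i ≤ a * Real.exp ((1 - p i) / a - 1) := fun i _ => by
    have := Real.add_one_le_exp ((1 - p i) / a - 1)
    have h2 : (1 - p i) / a ≤ Real.exp ((1 - p i) / a - 1) := by linarith
    rwa [div_le_iff₀' ha0] at h2
  have hsum : ∑ i ∈ s, ((1 - p i) / a - 1) = (s.card - P) / a - s.card := by
    rw [sum_sub_distrib, ← sum_div, sum_sub_distrib]
    simp [hP]
  have hprod_le : ∏ i ∈ s, (1 - p i) ≤ a ^ s.card * Real.exp ((s.card - P) / a - s.card) := by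
    refine (prod_le_prod (fun i hi => by linarith [hp i hi]) hfac).trans_eq ?_
    rw [prod_mul_distrib, prod_const, ← Real.exp_sum, hsum]
  have hlast : ((m : ℝ) + 1) * P - 1 ≤ m * Real.exp ((((m : ℝ) + 1) * P - 1) / m - 1) := by
    have := Real.add_one_le_exp ((((m : ℝ) + 1) * P - 1) / m - 1)
    have h2 : (((m : ℝ) + 1) * P - 1) / m ≤ Real.exp ((((m : ℝ) + 1) * P - 1) / m - 1) := by
      linarith
    rwa [div_le_iff₀' h0] at h2
  have hexp_le : Real.exp (-(1 / (m : ℝ))) ≤ a := by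
    rw [Real.exp_neg, ha, inv_le_comm₀ (Real.exp_pos _) (by positivity)]
    have := Real.add_one_le_exp (1 / (m : ℝ))
    calc ((m : ℝ) / (m + 1))⁻¹ = 1 / m + 1 := by field_simp; ring
      _ ≤ _ := this
  obtain ⟨r, hr⟩ := Nat.exists_eq_add_of_le hs
  have hcard : (s.card : ℝ) = m + 1 - r := by
    have : (m : ℝ) + 1 = s.card + r := by exact_mod_cast hr
    linarith
  have hexponent : Real.exp ((s.card - P) / a - s.card) *
      Real.exp ((((m : ℝ) + 1) * P - 1) / m - 1) = Real.exp (-(1 / (m : ℝ))) ^ r := by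
    rw [← Real.exp_add, ← Real.exp_nat_mul, hcard, ha]
    congr 1
    field_simp
    ring
  calc lamC (m + 2) * (∏ i ∈ s, (1 - p i)) * (((m : ℝ) + 1) * P - 1)
      ≤ lamC (m + 2) * (a ^ s.card * Real.exp ((s.card - P) / a - s.card)) *
        (m * Real.exp ((((m : ℝ) + 1) * P - 1) / m - 1)) := by gcongr
    _ = lamC (m + 2) * a ^ s.card * m * (Real.exp ((s.card - P) / a - s.card) *
        Real.exp ((((m : ℝ) + 1) * P - 1) / m - 1)) := by ring
    _ ≤ lamC (m + 2) * a ^ s.card * m * a ^ r := by rw [hexponent]; gcongr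
    _ = lamC (m + 2) * m * a ^ (m + 1) := by rw [hr, pow_add]; ring
    _ = 1 := by
      rw [lamC_add_two, ha, div_pow]
      field_simp
      ring

/-- One step of the tree recursion contracts the square-root potential. -/
lemma sqrt_mul_sum_sqrt_le {ι : Type*} {m : ℕ} (hm : 1 ≤ m) {δ : ℝ} (hδ : 0 < δ) (hδ1 : δ < 1)
    (hlam : lam = (1 - δ) * lamC (m + 2)) (s : Finset ι) (p : ι → ℝ)
    (hp : ∀ i ∈ s, 0 ≤ p i ∧ p i ≤ 1) (hs : s.card ≤ m + 1) :
    √((lam * ∏ i ∈ s, (1 - p i)) / (1 + lam * ∏ i ∈ s, (1 - p i))) * ∑ i ∈ s, √(p i) ≤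
      1 - δ / 20 := by
  have hL := lamC_pos hm
  have h1 : (1 : ℝ) ≤ m := by exact_mod_cast hm
  have hL9 : lamC (m + 2) ≤ 9 := by nlinarith [mul_lamC_le hm]
  have hkey := lamC_mul_prod_le hm s p (fun i hi => (hp i hi).2) hs
  have hprod : 0 ≤ ∏ i ∈ s, (1 - p i) := prod_nonneg fun i hi => by linarith [(hp i hi).2]
  have hprod1 : ∏ i ∈ s, (1 - p i) ≤ 1 :=
    prod_le_one (fun i hi => by linarith [(hp i hi).2]) fun i hi => by linarith [(hp i hi).1]
  have hP : 0 ≤ ∑ i ∈ s, p i := sum_nonneg fun i hi => (hp i hi).1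
  have hlam0 : 0 < lam := by rw [hlam]; exact mul_pos (by linarith) hL
  have hlam9 : lam ≤ 9 := by rw [hlam]; nlinarith
  set x := lam * ∏ i ∈ s, (1 - p i) with hx
  have hx0 : 0 ≤ x := by positivity
  have hx9 : x ≤ 9 := (mul_le_of_le_one_right hlam0.le hprod1).trans hlam9
  have hxle : x * (((m : ℝ) + 1) * ∑ i ∈ s, p i) ≤ x + (1 - δ) := by
    have := mul_le_mul_of_nonneg_left hkey (sub_pos.2 hδ1).le
    have h2 : x * (((m : ℝ) + 1) * ∑ i ∈ s, p i - 1) ≤ 1 - δ := by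
      rw [hx, hlam]; linarith
    linarith
  have hcs : (∑ i ∈ s, √(p i)) ^ 2 ≤ ((m : ℝ) + 1) * ∑ i ∈ s, p i := by
    refine sq_sum_le_card_mul_sum_sq.trans ?_
    rw [sum_congr rfl fun i hi => Real.sq_sqrt (hp i hi).1]
    gcongr
    exact_mod_cast hs
  apply le_of_sq_le_sq _ (by linarith)
  rw [mul_pow, Real.sq_sqrt (by positivity)]
  calc x / (1 + x) * (∑ i ∈ s, √(p i)) ^ 2
      ≤ x / (1 + x) * (((m : ℝ) + 1) * ∑ i ∈ s, p i) := by gcongr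
    _ = x * (((m : ℝ) + 1) * ∑ i ∈ s, p i) / (1 + x) := by ring
    _ ≤ (x + (1 - δ)) / (1 + x) := by gcongr
    _ ≤ 1 - δ / 10 := by
      rw [div_le_iff₀ (by positivity)]
      nlinarith
    _ ≤ (1 - δ / 20) ^ 2 := by nlinarith [sq_nonneg δ]

lemma prod_one_sub_occ_le_one (hl : 0 < lam) {U : Fin n → Finset (Fin n)}
    (hU : ∀ t ∈ T, t ∈ U t) : ∏ t ∈ T, (1 - occ G lam (U t) t) ≤ 1 :=
  prod_le_one (fun t ht => by linarith [occ_lt_one (G := G) hl (hU t ht)])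
    fun t ht => by linarith [occ_pos (G := G) hl (hU t ht)]

lemma prod_one_sub_occ_pos (hl : 0 < lam) {U : Fin n → Finset (Fin n)}
    (hU : ∀ t ∈ T, t ∈ U t) : 0 < ∏ t ∈ T, (1 - occ G lam (U t) t) :=
  prod_pos fun t ht => by linarith [occ_lt_one (G := G) hl (hU t ht)]

lemma occ_le (hl : 0 < lam) (hv : v ∈ W) : occ G lam W v ≤ lam / (1 + lam) := by
  obtain ⟨U, hU, hocc, -⟩ := exists_recursion (G := G) hl hv
  have h0 := prod_one_sub_occ_pos (G := G) hl fun t ht => (hU t ht).1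
  have h1 := prod_one_sub_occ_le_one (G := G) hl fun t ht => (hU t ht).1
  rw [hocc, div_le_div_iff₀ (by positivity) (by positivity)]
  nlinarith

lemma occ_le_lam (hl : 0 < lam) (hv : v ∈ W) : occ G lam W v ≤ lam :=
  (occ_le hl hv).trans (div_le_self hl.le (by linarith))

lemma inv_one_add_le_one_sub_occ (hl : 0 < lam) (hv : v ∈ W) :
    (1 + lam)⁻¹ ≤ 1 - occ G lam W v := by
  have h := occ_le (G := G) hl hv
  have : (1 + lam)⁻¹ = 1 - lam / (1 + lam) := by field_simp; ring
  linarith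

/-- Occupation probabilities are at least a multiple of the activity. -/
lemma le_occ (hl : 0 < lam) (hv : v ∈ W) {D : ℕ} (hD : (nbr G v ∩ W).card ≤ D) :
    lam * Real.exp (-(D * lam)) / (1 + lam) ≤ occ G lam W v := by
  obtain ⟨U, hU, hocc, -⟩ := exists_recursion (G := G) hl hv
  have h0 := prod_one_sub_occ_pos (G := G) hl fun t ht => (hU t ht).1
  have h1 := prod_one_sub_occ_le_one (G := G) hl fun t ht => (hU t ht).1
  have hexp : Real.exp (-lam) ≤ (1 + lam)⁻¹ := by
    rw [Real.exp_neg]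
    gcongr
    linarith [Real.add_one_le_exp lam]
  have hlow : Real.exp (-(D * lam)) ≤ ∏ t ∈ nbr G v ∩ W, (1 - occ G lam (U t) t) := by
    calc Real.exp (-(D * lam)) = Real.exp (-lam) ^ D := by
          rw [← Real.exp_nat_mul]; congr 1; ring
      _ ≤ Real.exp (-lam) ^ (nbr G v ∩ W).card :=
          pow_le_pow_of_le_one (Real.exp_pos _).le (Real.exp_le_one_iff.2 (by linarith)) hD
      _ = ∏ t ∈ nbr G v ∩ W, Real.exp (-lam) := by rw [prod_const]
      _ ≤ _ := prod_le_prod (fun _ _ => (Real.exp_pos _).le) fun t ht =>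
          hexp.trans (inv_one_add_le_one_sub_occ hl (hU t ht).1)
  rw [hocc]
  gcongr
  nlinarith

lemma card_nbr_inter_le {D : ℕ} (hdeg : ∀ v, (nbr G v).card ≤ D + 1) (huv : G.Adj v u)
    (hv : v ∉ W) : (nbr G u ∩ W).card ≤ D := by
  have hmem : v ∈ nbr G u := by simp [nbr, huv.symm]
  have hsub : nbr G u ∩ W ⊆ (nbr G u).erase v := fun t ht =>
    mem_erase.2 ⟨ne_of_mem_of_not_mem (mem_inter.1 ht).2 hv, (mem_inter.1 ht).1⟩
  have h1 := card_le_card hsub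
  rw [card_erase_of_mem hmem] at h1
  have := hdeg u
  omega

/-- Total influence bound for a vertex with at most `m + 1` neighbours. -/
lemma totalInfl_le_div_sqrt {m : ℕ} (hm : 1 ≤ m) {δ : ℝ} (hδ : 0 < δ) (hδ1 : δ < 1)
    (hlam : lam = (1 - δ) * lamC (m + 2)) (hdeg : ∀ v, (nbr G v).card ≤ m + 2)
    (W : Finset (Fin n)) :
    ∀ v ∈ W, (nbr G v ∩ W).card ≤ m + 1 →
      totalInfl G lam W v ≤ 20 * √lam / δ / √(occ G lam W v) := by
  have hl : 0 < lam := by rw [hlam]; exact mul_pos (by linarith) (lamC_pos hm)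
  induction W using Finset.strongInduction with
  | H W ih =>
    intro v hv hcard
    obtain ⟨U, hU, hocc, hinfl⟩ := exists_recursion (G := G) hl hv
    have hterm : ∀ t ∈ nbr G v ∩ W, occ G lam (U t) t * totalInfl G lam (U t) t ≤
        20 * √lam / δ * √(occ G lam (U t) t) := by
      intro t ht
      have hpos := occ_pos (G := G) hl (hU t ht).1
      have hadj : G.Adj v t := by
        simpa [nbr] using (mem_inter.1 ht).1
      have hvU : v ∉ U t := fun h => notMem_erase v W ((hU t ht).2 h)
      have hss : U t ⊂ W := (hU t ht).2.trans_ssubset (erase_ssubset hv)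
      have hIH := ih (U t) hss t (hU t ht).1 (card_nbr_inter_le hdeg hadj hvU)
      calc occ G lam (U t) t * totalInfl G lam (U t) t
          ≤ occ G lam (U t) t * (20 * √lam / δ / √(occ G lam (U t) t)) := by gcongr
        _ = 20 * √lam / δ * (occ G lam (U t) t / √(occ G lam (U t) t)) := by ring
        _ = _ := by rw [Real.div_sqrt]
    have hstep := sqrt_mul_sum_sqrt_le hm hδ hδ1 hlam (nbr G v ∩ W)
      (fun t => occ G lam (U t) t)
      (fun t ht => ⟨(occ_pos hl (hU t ht).1).le, (occ_lt_one hl (hU t ht).1).le⟩) hcard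
    rw [← hocc] at hstep
    have hroot : 0 < √(occ G lam W v) := Real.sqrt_pos.2 (occ_pos hl hv)
    have hle : √(occ G lam W v) ≤ √lam := Real.sqrt_le_sqrt (occ_le_lam hl hv)
    rw [le_div_iff₀ hroot]
    have hsum := sum_le_sum hterm
    rw [← mul_sum] at hsum
    calc totalInfl G lam W v * √(occ G lam W v)
        ≤ (1 + 20 * √lam / δ * ∑ t ∈ nbr G v ∩ W, √(occ G lam (U t) t)) *
          √(occ G lam W v) := by gcongr; linarith
      _ = √(occ G lam W v) + 20 * √lam / δ *
          (√(occ G lam W v) * ∑ t ∈ nbr G v ∩ W, √(occ G lam (U t) t)) := by ring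
      _ ≤ √lam + 20 * √lam / δ * (1 - δ / 20) := by gcongr
      _ = 20 * √lam / δ := by field_simp; ring

/-- Total influence bound for an arbitrary vertex. -/
lemma totalInfl_le {m : ℕ} (hm : 1 ≤ m) {δ : ℝ} (hδ : 0 < δ) (hδ1 : δ < 1)
    (hlam : lam = (1 - δ) * lamC (m + 2)) (hdeg : ∀ v, (nbr G v).card ≤ m + 2)
    (hv : v ∈ W) : totalInfl G lam W v ≤ 1 + 540 / δ := by
  have hL := lamC_pos hm
  have hl : 0 < lam := by rw [hlam]; exact mul_pos (by linarith) hL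
  have hl27 : ((m : ℝ) + 2) * lam ≤ 27 := by
    refine le_trans ?_ (mul_lamC_le hm)
    gcongr
    rw [hlam]; nlinarith
  obtain ⟨U, hU, -, hinfl⟩ := exists_recursion (G := G) hl hv
  have hterm : ∀ t ∈ nbr G v ∩ W, occ G lam (U t) t * totalInfl G lam (U t) t ≤
      20 * lam / δ := by
    intro t ht
    have hpos := occ_pos (G := G) hl (hU t ht).1
    have hadj : G.Adj v t := by simpa [nbr] using (mem_inter.1 ht).1
    have hvU : v ∉ U t := fun h => notMem_erase v W ((hU t ht).2 h)
    have hbd := totalInfl_le_div_sqrt hm hδ hδ1 hlam hdeg (U t) t (hU t ht).1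
      (card_nbr_inter_le hdeg hadj hvU)
    calc occ G lam (U t) t * totalInfl G lam (U t) t
        ≤ occ G lam (U t) t * (20 * √lam / δ / √(occ G lam (U t) t)) := by gcongr
      _ = 20 * √lam / δ * (occ G lam (U t) t / √(occ G lam (U t) t)) := by ring
      _ = 20 * √lam / δ * √(occ G lam (U t) t) := by rw [Real.div_sqrt]
      _ ≤ 20 * √lam / δ * √lam := by gcongr; exact occ_le_lam hl (hU t ht).1
      _ = 20 * (√lam * √lam) / δ := by ring
      _ = 20 * lam / δ := by rw [Real.mul_self_sqrt hl.le]
  have hcard : ((nbr G v ∩ W).card : ℝ) ≤ m + 2 := by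
    exact_mod_cast (card_le_card inter_subset_left).trans (hdeg v)
  have hsum := sum_le_card_nsmul _ _ _ hterm
  rw [nsmul_eq_mul] at hsum
  have : ((nbr G v ∩ W).card : ℝ) * (20 * lam / δ) ≤ 540 / δ := by
    calc ((nbr G v ∩ W).card : ℝ) * (20 * lam / δ) ≤ (m + 2) * (20 * lam / δ) := by gcongr
      _ = 20 * ((m + 2) * lam) / δ := by ring
      _ ≤ 20 * 27 / δ := by gcongr
      _ = 540 / δ := by norm_num
  linarith

/-- The joint occupation probability, computed by conditioning on `u`. -/
lemma wsum_mem_and_mem (hu : u ∈ W) (huv : u ≠ v) :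
    wsum G lam W (fun S => if v ∈ S ∧ u ∈ S then 1 else 0) =
      lam * wsum G lam (W.erase u \ nbr G u) (fun S => if v ∈ S then 1 else 0) := by
  rw [wsum_split hu]
  have : wsum G lam (W.erase u) (fun S => if v ∈ S ∧ u ∈ S then 1 else 0) = 0 := by
    unfold wsum
    refine sum_eq_zero fun S hS => ?_
    simp only [if_neg (fun h : v ∈ S ∧ u ∈ S =>
      notMem_erase u W (mem_powerset.1 hS h.2)), mul_zero]
  rw [this]
  simp [huv.symm]

lemma wsum_and_notMem (hu : u ∈ W) (E : Finset (Fin n) → Prop) :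
    wsum G lam W (fun S => if E S ∧ u ∉ S then 1 else 0) =
      wsum G lam (W.erase u) (fun S => if E S then 1 else 0) := by
  rw [wsum_split hu]
  have : wsum G lam (W.erase u) (fun S => if E S ∧ u ∉ S then 1 else 0) =
      wsum G lam (W.erase u) (fun S => if E S then 1 else 0) := by
    unfold wsum
    refine sum_congr rfl fun S hS => ?_
    have : u ∉ S := fun h => notMem_erase u W (mem_powerset.1 hS h)
    simp [this]
  rw [this]
  simp [wsum]

lemma occ_mul_one_sub_mul_infl (hl : 0 < lam) (hu : u ∈ W) (huv : u ≠ v) :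
    occ G lam W u * (1 - occ G lam W u) * infl G lam W u v =
      wsum G lam W (fun S => if v ∈ S ∧ u ∈ S then 1 else 0) / partZ G lam W -
        occ G lam W u * occ G lam W v := by
  have h1 := occ_erase_sub (G := G) hl hu v
  have h2 : infl G lam W u v = occ G lam (W.erase u \ nbr G u) v - occ G lam (W.erase u) v := by
    rw [infl, if_neg huv.symm, zero_add]
  have h3 : wsum G lam W (fun S => if v ∈ S ∧ u ∈ S then 1 else 0) / partZ G lam W =
      occ G lam W u * occ G lam (W.erase u \ nbr G u) v := by
    rw [wsum_mem_and_mem hu huv, occ_self hu, occ]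
    have := partZ_pos (G := G) hl (W.erase u \ nbr G u)
    field_simp
  rw [h3]
  linear_combination -occ G lam W u * h1 + occ G lam W u * h2

lemma occ_mul_one_sub_mul_infl_comm (hl : 0 < lam) (hu : u ∈ W) (hv : v ∈ W) (huv : u ≠ v) :
    occ G lam W u * (1 - occ G lam W u) * infl G lam W u v =
      occ G lam W v * (1 - occ G lam W v) * infl G lam W v u := by
  rw [occ_mul_one_sub_mul_infl hl hu huv, occ_mul_one_sub_mul_infl hl hv huv.symm]
  simp only [and_comm, mul_comm]

lemma prE_hardcore (E : Finset (Fin n) → Prop) :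
    prE (hardcore G lam) E =
      wsum G lam univ (fun S => if E S then 1 else 0) / partZ G lam univ := by
  have hZ : hardcoreZ G lam = partZ G lam univ := by
    simp [hardcoreZ, partZ, wsum, weight]
  unfold prE wsum
  rw [sum_div, powerset_univ]
  refine sum_congr rfl fun S _ => ?_
  by_cases h1 : E S <;> by_cases h2 : IsIndepSet G S <;> simp [hardcore, weight, h1, h2, hZ]

lemma psi_hardcore (hl : 0 < lam) (huv : u ≠ v) :
    psi (hardcore G lam) u v = infl G lam univ u v := by
  have hZ := partZ_pos (G := G) hl univ
  have hu := mem_univ u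
  have hboth : prE (hardcore G lam) (fun S => v ∈ S ∧ u ∈ S) =
      lam * wsum G lam (univ.erase u \ nbr G u) (fun S => if v ∈ S then 1 else 0) /
        partZ G lam univ := by
    rw [prE_hardcore, ← wsum_mem_and_mem hu huv]; congr!
  have hin : prE (hardcore G lam) (fun S => u ∈ S) =
      lam * partZ G lam (univ.erase u \ nbr G u) / partZ G lam univ := by
    rw [prE_hardcore, ← wsum_mem_self hu]; congr!
  have honly : prE (hardcore G lam) (fun S => v ∈ S ∧ u ∉ S) =
      wsum G lam (univ.erase u) (fun S => if v ∈ S then 1 else 0) / partZ G lam univ := by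
    have := wsum_and_notMem (G := G) (lam := lam) hu fun S => v ∈ S
    rw [prE_hardcore]; convert congrArg (· / partZ G lam univ) this
  have hout : prE (hardcore G lam) (fun S => u ∉ S) =
      partZ G lam (univ.erase u) / partZ G lam univ := by
    have := wsum_and_notMem (G := G) (lam := lam) hu fun _ => True
    simp only [true_and, if_true] at this
    rw [prE_hardcore, show partZ G lam (univ.erase u) = _ from this.symm]; congr!
  rw [psi, if_neg huv, condPrE, condPrE, hboth, hin, honly, hout,
    div_div_div_cancel_right₀ hZ.ne', div_div_div_cancel_right₀ hZ.ne',
    mul_div_mul_left _ _ hl.ne', infl, if_neg huv.symm, zero_add]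
  rfl

/-- Reversing the direction of an influence costs at most a constant factor. -/
lemma abs_infl_le {m : ℕ} (hm : 1 ≤ m) {δ : ℝ} (hδ : 0 < δ) (hδ1 : δ < 1)
    (hlam : lam = (1 - δ) * lamC (m + 2)) (hdeg : ∀ v, (nbr G v).card ≤ m + 2)
    (huv : u ≠ v) :
    |infl G lam univ u v| ≤ 100 * Real.exp 27 * |infl G lam univ v u| := by
  have hL := lamC_pos hm
  have hl : 0 < lam := by rw [hlam]; exact mul_pos (by linarith) hL
  have hle : lam ≤ lamC (m + 2) := by rw [hlam]; nlinarith
  have hl27 : ((m + 2 : ℕ) : ℝ) * lam ≤ 27 := by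
    refine le_trans ?_ (mul_lamC_le hm)
    push_cast
    gcongr
  have h1 : (1 : ℝ) ≤ m := by exact_mod_cast hm
  have hl9 : lam ≤ 9 := by push_cast at hl27; nlinarith
  have hcomm := occ_mul_one_sub_mul_infl_comm (G := G) hl (mem_univ u) (mem_univ v) huv
  have hpu := le_occ (G := G) hl (mem_univ u)
    ((card_le_card inter_subset_left).trans (hdeg u))
  have hqu := inv_one_add_le_one_sub_occ (G := G) hl (mem_univ u)
  have hpv := occ_le_lam (G := G) hl (mem_univ v)
  have hpv0 := occ_pos (G := G) hl (mem_univ v)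
  have hpv1 := occ_lt_one (G := G) hl (mem_univ v)
  have htenth : (1 / 10 : ℝ) ≤ (1 + lam)⁻¹ := by
    rw [one_div]; gcongr; linarith
  have hpu' : lam * Real.exp (-27) * (1 / 10) ≤ occ G lam univ u := by
    rw [div_eq_mul_inv] at hpu
    refine le_trans ?_ hpu
    have : Real.exp (-27) ≤ Real.exp (-(((m + 2 : ℕ) : ℝ) * lam)) :=
      Real.exp_le_exp.2 (neg_le_neg hl27)
    gcongr
  have hden : lam * Real.exp (-27) * (1 / 100) ≤
      occ G lam univ u * (1 - occ G lam univ u) := by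
    calc lam * Real.exp (-27) * (1 / 100) = lam * Real.exp (-27) * (1 / 10) * (1 / 10) := by ring
      _ ≤ _ := mul_le_mul hpu' (htenth.trans hqu) (by norm_num) (occ_pos hl (mem_univ u)).le
  have hnum : occ G lam univ v * (1 - occ G lam univ v) ≤ lam := by nlinarith
  have hnum0 : 0 ≤ occ G lam univ v * (1 - occ G lam univ v) := by nlinarith
  have hbase : lam * Real.exp (-27) * (1 / 100) * |infl G lam univ u v| ≤
      lam * |infl G lam univ v u| := by
    have habs := congrArg abs hcomm
    rw [abs_mul, abs_mul _ (infl G lam univ v u), abs_of_nonneg hnum0,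
      abs_of_nonneg (le_trans (by positivity) hden)] at habs
    calc _ ≤ occ G lam univ u * (1 - occ G lam univ u) * |infl G lam univ u v| := by gcongr
      _ = _ := habs
      _ ≤ _ := by gcongr
  have hexp : Real.exp 27 * Real.exp (-27) = 1 := by rw [← Real.exp_add]; simp
  have hpos : 0 < lam * Real.exp (-27) * (1 / 100) := by positivity
  refine le_of_mul_le_mul_left (hbase.trans_eq ?_) hpos
  linear_combination -(lam * |infl G lam univ v u|) * hexp

/-- There is a universal constant `c ≥ 1` such that for the
hardcore distribution at `λ = (1-δ)·λ_c(Δ)` on any graph of maximum degree at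
most `Δ`, the total influence on any vertex is at most `exp (c/δ)`. -/
theorem statement11 :
    ∃ c : ℝ, 1 ≤ c ∧
      ∀ δ : ℝ, 0 < δ → δ < 1 → ∀ (Δ : ℕ), 3 ≤ Δ →
      ∀ (n : ℕ), 2 ≤ n → ∀ G : SimpleGraph (Fin n),
      (∀ v : Fin n, (G.neighborSet v).ncard ≤ Δ) →
      ∀ v : Fin n,
        ∑ u ∈ Finset.univ.erase v, |psi (hardcore G ((1 - δ) * lamC Δ)) u v|
          ≤ Real.exp (c / δ) := by
  refine ⟨600, by norm_num, ?_⟩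
  intro δ hδ hδ1 Δ hΔ n _ G hdeg v
  obtain ⟨m, rfl⟩ : ∃ m, Δ = m + 2 := ⟨Δ - 2, by omega⟩
  have hm : 1 ≤ m := by omega
  have hl : 0 < (1 - δ) * lamC (m + 2) := mul_pos (by linarith) (lamC_pos hm)
  have hnbr : ∀ w, (nbr G w).card ≤ m + 2 := by
    intro w
    have h := hdeg w
    rwa [show G.neighborSet w = (nbr G w : Set (Fin n)) by ext; simp [nbr],
      Set.ncard_coe_finset] at h
  have hexp1 : (100 : ℝ) ≤ Real.exp 33 := by
    have := Real.quadratic_le_exp_of_nonneg (show (0 : ℝ) ≤ 33 by norm_num)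
    linarith
  have hconst : (60 : ℝ) ≤ 60 / δ := by
    rw [le_div_iff₀ hδ]; linarith
  calc ∑ u ∈ univ.erase v, |psi (hardcore G ((1 - δ) * lamC (m + 2))) u v|
      ≤ ∑ u ∈ univ.erase v,
          100 * Real.exp 27 * |infl G ((1 - δ) * lamC (m + 2)) univ v u| := by
        refine sum_le_sum fun u hu => ?_
        rw [psi_hardcore hl (ne_of_mem_erase hu)]
        exact abs_infl_le hm hδ hδ1 rfl hnbr (ne_of_mem_erase hu)
    _ ≤ ∑ u, 100 * Real.exp 27 * |infl G ((1 - δ) * lamC (m + 2)) univ v u| :=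
        sum_le_sum_of_subset_of_nonneg (erase_subset _ _) fun _ _ _ => by positivity
    _ = 100 * Real.exp 27 * totalInfl G ((1 - δ) * lamC (m + 2)) univ v := by
        rw [totalInfl, mul_sum]
    _ ≤ Real.exp 33 * Real.exp 27 * Real.exp (540 / δ) := by
        have hnonneg : 0 ≤ totalInfl G ((1 - δ) * lamC (m + 2)) univ v :=
          sum_nonneg fun _ _ => abs_nonneg _
        gcongr
        have := totalInfl_le (G := G) hm hδ hδ1 rfl hnbr (mem_univ v)
        linarith [Real.add_one_le_exp (540 / δ)]
    _ = Real.exp (60 + 540 / δ) := by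
        rw [← Real.exp_add, ← Real.exp_add]; norm_num
    _ ≤ Real.exp (600 / δ) := by
        apply Real.exp_le_exp.2
        have : 600 / δ = 60 / δ + 540 / δ := by ring
        linarith

end PaperStmt
end
end

section
/- Let Δ ≥ 2 and 1 ≤ m ≤ Δ be integers, λ > 0, and 0 < η ≤ 1/2. Let Rmin, Rmax : Fin m → ℝ satisfy 0 ≤ Rmin(u) ≤ Rmax(u) ≤ Rmin(u) + η for every u. Then ∑_{u ∈ Fin m} sup{ G_u(R) : R : Fin m → ℝ with Rmin(w) ≤ R(w) ≤ Rmax(w) for all w } ≤ (1+2η)^{Δ+1} · ∑_{u ∈ Fin m} G_u(Rmax). -/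
open Finset

noncomputable section

namespace PaperStmt

/-- The hardcore tree-recursion map `F(R) = λ · ∏_u 1/(1 + R u)`. -/
def Fhc (lam : ℝ) {m : ℕ} (R : Fin m → ℝ) : ℝ :=
  lam * ∏ u : Fin m, 1 / (1 + R u)

/-- `G_u(R) = Φ(F(R)) · |∂F/∂R_u (R)| / Φ(R u)` for the potential
`φ(x) = 2 log(√x + √(x+1))` with `Φ(x) = 1/√(x(x+1))`, expressed in the
`R`-variables. -/
def Ghc (lam : ℝ) {m : ℕ} (u : Fin m) (R : Fin m → ℝ) : ℝ :=
  Real.sqrt (R u * (1 + R u)) * (Fhc lam R / (1 + R u))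
    / Real.sqrt (Fhc lam R * (1 + Fhc lam R))

theorem Fhc_pos {lam : ℝ} (hlam : 0 < lam) {m : ℕ} {R : Fin m → ℝ} (hR : ∀ u, 0 ≤ R u) :
    0 < Fhc lam R :=
  mul_pos hlam (prod_pos fun u _ => one_div_pos.2 (by linarith [hR u]))

theorem Ghc_eq_sqrt_mul_sqrt {lam : ℝ} (hlam : 0 < lam) {m : ℕ} (u : Fin m) {R : Fin m → ℝ}
    (hR : ∀ u, 0 ≤ R u) :
    Ghc lam u R = Real.sqrt (R u / (1 + R u)) * Real.sqrt (Fhc lam R / (1 + Fhc lam R)) := by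
  have hF := Fhc_pos hlam hR
  have hu := hR u
  have h1 : 0 < 1 + R u := by linarith
  unfold Ghc
  generalize Fhc lam R = F at *
  rw [Real.sqrt_mul hu, Real.sqrt_mul hF.le, Real.sqrt_div hu, Real.sqrt_div hF.le]
  have e1 := Real.sq_sqrt h1.le
  have e2 := Real.sq_sqrt hF.le
  have p1 := Real.sqrt_pos.2 h1
  have p2 := Real.sqrt_pos.2 hF
  have p3 : 0 < Real.sqrt (1 + F) := Real.sqrt_pos.2 (by linarith)
  rw [div_mul_div_comm, mul_div_assoc', div_div, div_eq_div_iff (by positivity) (by positivity)]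
  linear_combination (Real.sqrt (R u) * F * Real.sqrt (1 + F)) * e1
    - (Real.sqrt (R u) * Real.sqrt (1 + F) * (1 + R u)) * e2

/-- Shifting every coordinate by at most `η` changes `F` by a factor of at most `(1 + η)^m`. -/
theorem Fhc_le_pow_mul_Fhc {lam : ℝ} (hlam : 0 < lam) {m : ℕ} {η : ℝ} (hη : 0 ≤ η)
    {R S : Fin m → ℝ} (hR : ∀ u, 0 ≤ R u) (hS : ∀ u, 0 ≤ S u) (hRS : ∀ u, S u ≤ R u + η) :
    Fhc lam R ≤ (1 + η) ^ m * Fhc lam S := by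
  have key : ∏ u, 1 / (1 + R u) ≤ ∏ u : Fin m, (1 + η) * (1 / (1 + S u)) := by
    refine prod_le_prod (fun u _ => one_div_nonneg.2 (by linarith [hR u])) fun u _ => ?_
    have h1 := hR u
    have h2 := hS u
    rw [mul_one_div, div_le_div_iff₀ (by linarith) (by linarith)]
    nlinarith [hRS u, mul_nonneg hη h1]
  rw [prod_mul_distrib, prod_const, card_univ, Fintype.card_fin] at key
  calc Fhc lam R ≤ lam * ((1 + η) ^ m * ∏ u, 1 / (1 + S u)) :=
        mul_le_mul_of_nonneg_left key hlam.le
    _ = (1 + η) ^ m * Fhc lam S := by unfold Fhc; ring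

theorem sqrt_div_one_add_le_mul {c x y : ℝ} (hc : 1 ≤ c) (hx : 0 ≤ x) (hy : 0 ≤ y)
    (hxy : x ≤ c * y) : Real.sqrt (x / (1 + x)) ≤ c * Real.sqrt (y / (1 + y)) := by
  refine Real.sqrt_le_iff.2 ⟨by positivity, ?_⟩
  rw [mul_pow, Real.sq_sqrt (by positivity)]
  have h : x / (1 + x) ≤ c * (y / (1 + y)) := by
    rw [mul_div_assoc', div_le_div_iff₀ (by linarith) (by linarith)]
    nlinarith [mul_nonneg (mul_nonneg hx hy) (sub_nonneg.2 hc)]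
  exact h.trans (mul_le_mul_of_nonneg_right (by nlinarith) (by positivity))

theorem Ghc_le_pow_mul_Ghc {lam : ℝ} (hlam : 0 < lam) {m : ℕ} {η : ℝ} (hη : 0 ≤ η)
    {R S : Fin m → ℝ} (hR : ∀ u, 0 ≤ R u) (hRS : ∀ u, R u ≤ S u) (hSR : ∀ u, S u ≤ R u + η)
    (u : Fin m) : Ghc lam u R ≤ (1 + η) ^ m * Ghc lam u S := by
  have hS : ∀ u, 0 ≤ S u := fun u => (hR u).trans (hRS u)
  rw [Ghc_eq_sqrt_mul_sqrt hlam u hR, Ghc_eq_sqrt_mul_sqrt hlam u hS, mul_left_comm]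
  have hu := hR u
  have hu' := hS u
  refine mul_le_mul (Real.sqrt_le_sqrt ?_) ?_ (Real.sqrt_nonneg _) (Real.sqrt_nonneg _)
  · rw [div_le_div_iff₀ (by linarith) (by linarith)]
    nlinarith [hRS u]
  · exact sqrt_div_one_add_le_mul (one_le_pow₀ (by linarith)) (Fhc_pos hlam hR).le
      (Fhc_pos hlam hS).le (Fhc_le_pow_mul_Fhc hlam hη hR hS hSR)

theorem Ghc_nonneg {lam : ℝ} (hlam : 0 < lam) {m : ℕ} (u : Fin m) {R : Fin m → ℝ}
    (hR : ∀ u, 0 ≤ R u) : 0 ≤ Ghc lam u R := by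
  rw [Ghc_eq_sqrt_mul_sqrt hlam u hR]
  positivity

/-- If the boxes `[Rmin u, Rmax u]` have width at most
`η ≤ 1/2`, then the sum over `u` of the suprema of `G_u` over the box is at
most `(1+2η)^(Δ+1)` times the sum of the values `G_u(Rmax)`. -/
theorem statement17 (Δ m : ℕ) (hΔ : 2 ≤ Δ) (hm : 1 ≤ m) (hmΔ : m ≤ Δ)
    (lam : ℝ) (hlam : 0 < lam) (η : ℝ) (hη0 : 0 < η) (hη : η ≤ 1 / 2)
    (Rmin Rmax : Fin m → ℝ)
    (hR : ∀ u, 0 ≤ Rmin u ∧ Rmin u ≤ Rmax u ∧ Rmax u ≤ Rmin u + η) :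
    (∑ u : Fin m, sSup {x : ℝ | ∃ R : Fin m → ℝ,
        (∀ w, Rmin w ≤ R w ∧ R w ≤ Rmax w) ∧ x = Ghc lam u R})
      ≤ (1 + 2 * η) ^ (Δ + 1) * ∑ u : Fin m, Ghc lam u Rmax := by
  have hmax : ∀ w, 0 ≤ Rmax w := fun w => (hR w).1.trans (hR w).2.1
  rw [mul_sum]
  refine sum_le_sum fun u _ => csSup_le ⟨_, Rmin, fun w => ⟨le_rfl, (hR w).2.1⟩, rfl⟩ ?_
  rintro _ ⟨R, hRw, rfl⟩
  refine (Ghc_le_pow_mul_Ghc hlam hη0.le (fun w => (hR w).1.trans (hRw w).1)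
    (fun w => (hRw w).2) (fun w => by linarith [(hR w).2.2, (hRw w).1]) u).trans ?_
  refine mul_le_mul_of_nonneg_right ?_ (Ghc_nonneg hlam u hmax)
  calc (1 + η) ^ m ≤ (1 + 2 * η) ^ m := by gcongr; linarith
    _ ≤ (1 + 2 * η) ^ (Δ + 1) := pow_le_pow_right₀ (by linarith) (by omega)

end PaperStmt
end
end

section
/- Let d ≥ 1 be an integer, λ > 0, and δ ∈ (0,1). Then: (1) for every R > 0 with λ = R·(1+R)^d (i.e. R is a positive fixed point of f_d(x) = λ/(1+x)^d), the inequality d·R/(1+R) ≤ 1−δ holds if and only if λ ≤ (d/(d−1+δ))^d · (1−δ)/(d−1+δ). (2) Moreover, if d ≥ 2, then setting λ_c = d^d/(d−1)^{d+1} and λ*(δ) = (d/(d−1+δ))^d · (1−δ)/(d−1+δ), one has (1 − δ − (d+1)·δ/(d−1+δ))·λ_c ≤ λ*(δ) ≤ (1−δ)·λ_c. -/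
/-- The map `x ↦ x (1 + x)^d` is strictly increasing on the nonnegative reals. -/
lemma strictMonoOn_mul_one_add_pow (d : ℕ) :
    StrictMonoOn (fun x : ℝ => x * (1 + x) ^ d) (Set.Ici 0) := by
  intro x hx y _ hxy
  have hx : 0 ≤ x := hx
  have hpow : (1 + x) ^ d ≤ (1 + y) ^ d := by gcongr
  have hpos : 0 < (1 + x) ^ d := by positivity
  exact mul_lt_mul hxy hpow hpos (hx.trans hxy.le)

/-- The slope `d R / (1 + R)` is at most `1 - δ` exactly when `R ≤ (1 - δ) / (d - 1 + δ)`. -/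
lemma mul_div_one_add_le_iff {d R δ : ℝ} (hc : 0 < d - 1 + δ) (hR : 0 < R) :
    d * R / (1 + R) ≤ 1 - δ ↔ R ≤ (1 - δ) / (d - 1 + δ) := by
  rw [div_le_iff₀ (by linarith), le_div_iff₀ hc]
  constructor <;> intro h <;> linarith

/-- Bernoulli's inequality for the ratio `a / (a + δ)`. -/
lemma one_sub_mul_div_le_div_pow {a δ : ℝ} (ha : 0 < a) (hδ : 0 < δ) (n : ℕ) :
    1 - n * δ / (a + δ) ≤ (a / (a + δ)) ^ n := by
  have hc : 0 < a + δ := by linarith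
  have hle : δ / (a + δ) ≤ 1 := by rw [div_le_one hc]; linarith
  have h := one_add_mul_le_pow (a := -(δ / (a + δ))) (by linarith) n
  have hbase : 1 + -(δ / (a + δ)) = a / (a + δ) := by field_simp; ring
  rw [hbase] at h
  calc 1 - n * δ / (a + δ) = 1 + n * -(δ / (a + δ)) := by ring
    _ ≤ _ := h

/-- (1) At any positive fixed point `R` of the hardcore
univariate tree recursion `f_d(x) = λ/(1+x)^d` (i.e. `λ = R(1+R)^d`), one has
`d·R/(1+R) ≤ 1-δ` iff `λ ≤ (d/(d-1+δ))^d · (1-δ)/(d-1+δ)`.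
(2) Moreover, for `d ≥ 2`, with `λ_c = d^d/(d-1)^(d+1)` and
`λ*(δ) = (d/(d-1+δ))^d · (1-δ)/(d-1+δ)`, one has
`(1 - δ - (d+1)δ/(d-1+δ))·λ_c ≤ λ*(δ) ≤ (1-δ)·λ_c`. -/
theorem statement18 (d : ℕ) (hd : 1 ≤ d) (lam : ℝ) (hlam : 0 < lam)
    (δ : ℝ) (hδ0 : 0 < δ) (hδ1 : δ < 1) :
    (∀ R : ℝ, 0 < R → lam = R * (1 + R) ^ d →
      ((d : ℝ) * R / (1 + R) ≤ 1 - δ ↔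
        lam ≤ ((d : ℝ) / ((d : ℝ) - 1 + δ)) ^ d * ((1 - δ) / ((d : ℝ) - 1 + δ))))
    ∧ (2 ≤ d →
        (1 - δ - ((d : ℝ) + 1) * δ / ((d : ℝ) - 1 + δ))
            * ((d : ℝ) ^ d / ((d : ℝ) - 1) ^ (d + 1))
          ≤ ((d : ℝ) / ((d : ℝ) - 1 + δ)) ^ d * ((1 - δ) / ((d : ℝ) - 1 + δ))
        ∧ ((d : ℝ) / ((d : ℝ) - 1 + δ)) ^ d * ((1 - δ) / ((d : ℝ) - 1 + δ))
            ≤ (1 - δ) * ((d : ℝ) ^ d / ((d : ℝ) - 1) ^ (d + 1))) := by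
  have hd' : (1 : ℝ) ≤ d := by exact_mod_cast hd
  have hc : 0 < (d : ℝ) - 1 + δ := by linarith
  constructor
  · intro R hR hfix
    have hR₀ : 0 ≤ (1 - δ) / ((d : ℝ) - 1 + δ) := div_nonneg (by linarith) hc.le
    have hone : (d : ℝ) / ((d : ℝ) - 1 + δ) = 1 + (1 - δ) / ((d : ℝ) - 1 + δ) := by
      field_simp
      ring
    rw [mul_div_one_add_le_iff hc hR, hfix, hone, mul_comm (_ ^ d)]
    exact ((strictMonoOn_mul_one_add_pow d).le_iff_le hR.le hR₀).symm
  · intro hd2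
    have hd2' : (2 : ℝ) ≤ d := by exact_mod_cast hd2
    have ha : 0 < (d : ℝ) - 1 := by linarith
    have hcrit : 0 ≤ (d : ℝ) ^ d / ((d : ℝ) - 1) ^ (d + 1) := by positivity
    have hfactor : ((d : ℝ) / ((d : ℝ) - 1 + δ)) ^ d * ((1 - δ) / ((d : ℝ) - 1 + δ)) =
        (1 - δ) * (((d : ℝ) - 1) / ((d : ℝ) - 1 + δ)) ^ (d + 1) *
          ((d : ℝ) ^ d / ((d : ℝ) - 1) ^ (d + 1)) := by
      rw [div_pow, div_pow, pow_succ ((d : ℝ) - 1 + δ)]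
      field_simp
    rw [hfactor]
    constructor
    · refine mul_le_mul_of_nonneg_right ?_ hcrit
      have hbern := one_sub_mul_div_le_div_pow ha hδ0 (d + 1)
      push_cast at hbern
      have hnonneg : 0 ≤ ((d : ℝ) + 1) * δ / ((d : ℝ) - 1 + δ) := by positivity
      nlinarith [mul_le_mul_of_nonneg_left hbern (sub_nonneg.2 hδ1.le)]
    · refine mul_le_mul_of_nonneg_right ?_ hcrit
      refine mul_le_of_le_one_right (by linarith) (pow_le_one₀ (by positivity) ?_)
      rw [div_le_one hc]
      linarith
end

section
/- Let u, v, w be distinct vertices of T such that w lies on the (unique) path from u to v, and assume 0 < Pr[σ(u)=0] < 1 and 0 < Pr[σ(w)=0] < 1. Then Ψ(u,v) = Ψ(u,w) · Ψ(w,v). -/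
open scoped Classical
open Finset

noncomputable section

namespace PaperStmt

variable {V : Type*} [Fintype V]

/-- The number of edges of `T` whose two endpoints both have spin `s`
(`false` = spin 0, `true` = spin 1). -/
def mcount (T : SimpleGraph V) (σ : V → Bool) (s : Bool) : ℕ :=
  (Finset.univ.filter fun e : Sym2 V => e ∈ T.edgeSet ∧ ∀ v ∈ e, σ v = s).card

/-- The two-state spin system weight
`w(σ) = β^{m₀(σ)} · γ^{m₁(σ)} · λ^{|σ⁻¹(0)|}`. -/
def spinWeight (T : SimpleGraph V) (β γ lam : ℝ) (σ : V → Bool) : ℝ :=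
  β ^ mcount T σ false * γ ^ mcount T σ true
    * lam ^ (Finset.univ.filter fun v => σ v = false).card

/-- Unnormalized probability of an event under the spin system. -/
def spinPr (T : SimpleGraph V) (β γ lam : ℝ) (E : (V → Bool) → Prop) : ℝ :=
  ∑ σ : V → Bool, if E σ then spinWeight T β γ lam σ else 0

/-- Conditional probability `Pr[E | F]` under the spin system. -/
def spinCondPr (T : SimpleGraph V) (β γ lam : ℝ)
    (E F : (V → Bool) → Prop) : ℝ :=
  spinPr T β γ lam (fun σ => E σ ∧ F σ) / spinPr T β γ lam F

/-- The pairwise influence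
`Ψ(x,y) = Pr[σ y = 0 | σ x = 0] − Pr[σ y = 0 | σ x = 1]`. -/
def spinPsi (T : SimpleGraph V) (β γ lam : ℝ) (x y : V) : ℝ :=
  spinCondPr T β γ lam (fun σ => σ y = false) (fun σ => σ x = false)
    - spinCondPr T β γ lam (fun σ => σ y = false) (fun σ => σ x = true)

/-- The set of vertices joined to `u` by a walk avoiding `w`. -/
def avoidingComponent (T : SimpleGraph V) (u w : V) : Set V :=
  {x | ∃ p : T.Walk u x, w ∉ p.support}

omit [Fintype V] in
lemma not_mem_avoidingComponent_self (T : SimpleGraph V) (u w : V) :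
    w ∉ avoidingComponent T u w :=
  fun ⟨p, hp⟩ => hp p.end_mem_support

omit [Fintype V] in
lemma mem_avoidingComponent_left (T : SimpleGraph V) {u w : V} (huw : u ≠ w) :
    u ∈ avoidingComponent T u w :=
  ⟨SimpleGraph.Walk.nil, by simpa using huw.symm⟩

omit [Fintype V] in
/-- Every edge leaving the component ends at the removed vertex. -/
lemma mem_avoidingComponent_of_adj {T : SimpleGraph V} {u w x y : V}
    (hx : x ∈ avoidingComponent T u w) (hxy : T.Adj x y) (hy : y ≠ w) :
    y ∈ avoidingComponent T u w := by
  obtain ⟨p, hp⟩ := hx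
  refine ⟨p.concat hxy, ?_⟩
  simp [SimpleGraph.Walk.support_concat, hp, hy.symm]

omit [Fintype V] in
/-- In a tree, a vertex `w` on the geodesic from `u` to `v` separates `u` from `v`. -/
lemma not_mem_avoidingComponent_of_dist {T : SimpleGraph V} (hT : T.IsTree) {u v w : V}
    (hpath : T.dist u v = T.dist u w + T.dist w v) :
    v ∉ avoidingComponent T u w := by
  rintro ⟨p, hp⟩
  obtain ⟨q₁, hq₁⟩ := hT.connected.exists_walk_length_eq_dist u w
  obtain ⟨q₂, hq₂⟩ := hT.connected.exists_walk_length_eq_dist w v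
  have hq : (q₁.append q₂).IsPath :=
    SimpleGraph.Walk.isPath_of_length_eq_dist _ (by
      rw [SimpleGraph.Walk.length_append, hq₁, hq₂, hpath])
  have heq : q₁.append q₂ = p.bypass :=
    congrArg Subtype.val
      ((hT.isAcyclic.subsingleton_path u v).elim ⟨_, hq⟩ ⟨_, p.bypass_isPath⟩)
  have hw : w ∈ (q₁.append q₂).support := by simp
  rw [heq] at hw
  exact hp (p.support_bypass_subset_support hw)

/-- The configuration that agrees with `σ` on `A` and with `τ` off `A`. -/
def glue (A : Set V) (σ τ : V → Bool) : V → Bool := fun x => if x ∈ A then σ x else τ x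

omit [Fintype V] in
lemma glue_glue (A : Set V) (σ τ : V → Bool) :
    glue A (glue A σ τ) (glue A τ σ) = σ := by
  funext x
  by_cases hx : x ∈ A <;> simp [glue, hx]

lemma mcount_eq_sum (T : SimpleGraph V) (σ : V → Bool) (s : Bool) :
    mcount T σ s = ∑ e : Sym2 V, if e ∈ T.edgeSet ∧ ∀ v ∈ e, σ v = s then 1 else 0 := by
  rw [mcount, Finset.card_filter]

/-- Exchanging the parts off `A` of two configurations that agree at the boundary `w` of `A`
preserves the total number of monochromatic edges. -/
lemma mcount_glue_add (T : SimpleGraph V) {A : Set V} {w : V}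
    (hA : ∀ x ∈ A, ∀ y, T.Adj x y → y ≠ w → y ∈ A) {σ τ : V → Bool} (h : σ w = τ w)
    (s : Bool) :
    mcount T (glue A σ τ) s + mcount T (glue A τ σ) s = mcount T σ s + mcount T τ s := by
  simp only [mcount_eq_sum, ← Finset.sum_add_distrib]
  refine Finset.sum_congr rfl fun e _ => ?_
  induction e using Sym2.ind with
  | _ x y =>
    by_cases hxy : T.Adj x y
    · simp only [SimpleGraph.mem_edgeSet, hxy, true_and, Sym2.mem_iff, forall_eq_or_imp,
        forall_eq, glue]
      have hx := fun hx => hA x hx y hxy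
      have hy := fun hy => hA y hy x hxy.symm
      by_cases hxA : x ∈ A <;> by_cases hyA : y ∈ A
      · simp [hxA, hyA]
      · obtain rfl : y = w := by_contra fun hne => hyA (hx hxA hne)
        simp [hxA, hyA, h]
      · obtain rfl : x = w := by_contra fun hne => hxA (hy hyA hne)
        simp [hxA, hyA, h]
      · simp [hxA, hyA, add_comm]
    · simp [hxy]

lemma card_filter_glue_add (A : Set V) (σ τ : V → Bool) :
    (Finset.univ.filter fun v => glue A σ τ v = false).card
      + (Finset.univ.filter fun v => glue A τ σ v = false).card
      = (Finset.univ.filter fun v => σ v = false).card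
        + (Finset.univ.filter fun v => τ v = false).card := by
  simp only [Finset.card_filter, ← Finset.sum_add_distrib]
  refine Finset.sum_congr rfl fun x _ => ?_
  by_cases hx : x ∈ A <;> simp [glue, hx, add_comm]

lemma spinWeight_glue_mul (T : SimpleGraph V) (β γ lam : ℝ) {A : Set V} {w : V}
    (hA : ∀ x ∈ A, ∀ y, T.Adj x y → y ≠ w → y ∈ A) {σ τ : V → Bool} (h : σ w = τ w) :
    spinWeight T β γ lam (glue A σ τ) * spinWeight T β γ lam (glue A τ σ)
      = spinWeight T β γ lam σ * spinWeight T β γ lam τ := by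
  have key : ∀ a b c a' b' c' : ℕ,
      β ^ a * γ ^ b * lam ^ c * (β ^ a' * γ ^ b' * lam ^ c')
        = β ^ (a + a') * γ ^ (b + b') * lam ^ (c + c') := by
    intros; ring
  simp only [spinWeight, key, mcount_glue_add T hA h, card_filter_glue_add]

/-- The spatial Markov property: given the spin at `w`, the spin of a vertex inside `A` and the
spin of a vertex outside `A` are independent. -/
lemma spinPr_mul_spinPr_eq (T : SimpleGraph V) (β γ lam : ℝ) {A : Set V} {u v w : V}
    (hA : ∀ x ∈ A, ∀ y, T.Adj x y → y ≠ w → y ∈ A)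
    (hu : u ∈ A) (hv : v ∉ A) (hw : w ∉ A) (a b c : Bool) :
    spinPr T β γ lam (fun σ => (σ v = b ∧ σ u = a) ∧ σ w = c)
        * spinPr T β γ lam (fun σ => σ w = c)
      = spinPr T β γ lam (fun σ => σ w = c ∧ σ u = a)
        * spinPr T β γ lam (fun σ => σ v = b ∧ σ w = c) := by
  simp only [spinPr, Finset.sum_mul_sum, ← Finset.sum_product', Finset.univ_product_univ]
  let swap : (V → Bool) × (V → Bool) → (V → Bool) × (V → Bool) :=
    fun p => (glue A p.1 p.2, glue A p.2 p.1)
  have hswap : Function.Involutive swap := fun p => by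
    simp only [swap, glue_glue]
  refine Fintype.sum_equiv hswap.toPerm _ _ fun p => ?_
  obtain ⟨σ, τ⟩ := p
  have hmul := spinWeight_glue_mul T β γ lam hA (σ := σ) (τ := τ)
  simp only [Function.Involutive.coe_toPerm, swap]
  have e1 : glue A σ τ w = τ w := by simp [glue, hw]
  have e2 : glue A τ σ w = σ w := by simp [glue, hw]
  have e3 : glue A σ τ u = σ u := by simp [glue, hu]
  have e4 : glue A τ σ v = σ v := by simp [glue, hv]
  simp only [e1, e2, e3, e4, ite_mul, mul_ite, zero_mul, mul_zero]
  by_cases h : σ w = τ w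
  · rw [hmul h, h]
    split_ifs <;> tauto
  · split_ifs <;> first | rfl | (exfalso; simp_all)

lemma spinPr_eq_add (T : SimpleGraph V) (β γ lam : ℝ) (E : (V → Bool) → Prop) (x : V) :
    spinPr T β γ lam E
      = spinPr T β γ lam (fun σ => E σ ∧ σ x = false)
        + spinPr T β γ lam (fun σ => E σ ∧ σ x = true) := by
  simp only [spinPr, ← Finset.sum_add_distrib]
  refine Finset.sum_congr rfl fun σ _ => ?_
  rcases Bool.eq_false_or_eq_true (σ x) with h | h <;> simp [h]

/-- Both spins at `x` have nonzero mass when the spin at `x` is nondegenerate. -/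
lemma spinPr_ne_zero_of_nondegenerate (T : SimpleGraph V) (β γ lam : ℝ)
    (hZ : 0 < spinPr T β γ lam (fun _ => True)) {x : V}
    (h0 : 0 < spinPr T β γ lam (fun σ => σ x = false) / spinPr T β γ lam (fun _ => True))
    (h1 : spinPr T β γ lam (fun σ => σ x = false) / spinPr T β γ lam (fun _ => True) < 1) :
    spinPr T β γ lam (fun σ => σ x = false) ≠ 0
      ∧ spinPr T β γ lam (fun σ => σ x = true) ≠ 0 := by
  have hsum := spinPr_eq_add T β γ lam (fun _ => True) x
  simp only [true_and] at hsum
  rw [div_lt_one hZ] at h1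
  exact ⟨((div_pos_iff_of_pos_right hZ).mp h0).ne', by linarith⟩

/-- For a two-state spin system on a tree, if `w` lies on the
path from `u` to `v` (all distinct) and the spins of `u` and `w` are
nondegenerate, then `Ψ(u,v) = Ψ(u,w) · Ψ(w,v)`. -/
theorem statement19 (V : Type) [Fintype V] (T : SimpleGraph V) (hT : T.IsTree)
    (β γ lam : ℝ) (hβ : 0 ≤ β) (hγ : 0 ≤ γ) (hlam : 0 ≤ lam)
    (hZ : 0 < spinPr T β γ lam (fun _ => True))
    (u v w : V) (huv : u ≠ v) (huw : u ≠ w) (hvw : v ≠ w)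
    (hpath : T.dist u v = T.dist u w + T.dist w v)
    (hu0 : 0 < spinPr T β γ lam (fun σ => σ u = false)
              / spinPr T β γ lam (fun _ => True))
    (hu1 : spinPr T β γ lam (fun σ => σ u = false)
              / spinPr T β γ lam (fun _ => True) < 1)
    (hw0 : 0 < spinPr T β γ lam (fun σ => σ w = false)
              / spinPr T β γ lam (fun _ => True))
    (hw1 : spinPr T β γ lam (fun σ => σ w = false)
              / spinPr T β γ lam (fun _ => True) < 1) :
    spinPsi T β γ lam u v = spinPsi T β γ lam u w * spinPsi T β γ lam w v := by
  obtain ⟨hu0', hu1'⟩ := spinPr_ne_zero_of_nondegenerate T β γ lam hZ hu0 hu1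
  obtain ⟨hw0', hw1'⟩ := spinPr_ne_zero_of_nondegenerate T β γ lam hZ hw0 hw1
  have markov := spinPr_mul_spinPr_eq T β γ lam (A := avoidingComponent T u w)
    (fun x hx y hxy hy => mem_avoidingComponent_of_adj hx hxy hy)
    (mem_avoidingComponent_left T huw) (not_mem_avoidingComponent_of_dist hT hpath)
    (not_mem_avoidingComponent_self T u w)
  have joint : ∀ a, spinPr T β γ lam (fun σ => σ v = false ∧ σ u = a)
      = spinPr T β γ lam (fun σ => σ w = false ∧ σ u = a)
          * spinPr T β γ lam (fun σ => σ v = false ∧ σ w = false)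
          / spinPr T β γ lam (fun σ => σ w = false)
        + spinPr T β γ lam (fun σ => σ w = true ∧ σ u = a)
          * spinPr T β γ lam (fun σ => σ v = false ∧ σ w = true)
          / spinPr T β γ lam (fun σ => σ w = true) := fun a => by
    rw [spinPr_eq_add T β γ lam _ w, ← markov, ← markov, mul_div_cancel_right₀ _ hw0',
      mul_div_cancel_right₀ _ hw1']
  have marginal : ∀ a, spinPr T β γ lam (fun σ => σ w = true ∧ σ u = a)
      = spinPr T β γ lam (fun σ => σ u = a)
        - spinPr T β γ lam (fun σ => σ w = false ∧ σ u = a) := fun a => by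
    rw [spinPr_eq_add T β γ lam (fun σ => σ u = a) w]
    simp only [and_comm, add_sub_cancel_left]
  simp only [spinPsi, spinCondPr, joint, marginal]
  field_simp
  ring

end PaperStmt
end
end
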